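/- Let S be a G-flow with Ellis semigroup E = E(S). Suppose K ⊆ E is a closed left ideal of the semigroup (E, ∘) (i.e., p ∘ q ∈ K for all p ∈ E and q ∈ K) that, under composition and the subspace topology, is a compact topological group; let η be its Haar probability measure. Define a regular Borel probability measure η* on E by η*(X) = η(X ∩ K) for Borel X ⊆ E. Then η* is invariant under the G-action on E: η*(g·X) = η*(X) for every g ∈ G and every Borel set X ⊆ E, where g·X = {(x ↦ g·x) ∘ p : p ∈ X}. -/

import Mathlib

/-!
Let `u` be the identity of the group `K`. For `p ∈ K` one has `g⁻¹ • p = g⁻¹ • (u ∘ p) =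
(g⁻¹ • u) ∘ p`, and `g⁻¹ • u ∈ K` because `K` is a left ideal. Hence `g⁻¹` acts on `K` as a left
translation of the group `K`, which preserves `η`. Since `g • X` is the preimage of `X` under the
action of `g⁻¹`, invariance of `η*` follows.
-/

set_option linter.unusedSectionVars false

open MeasureTheory

variable {G : Type*} [Group G] {S : Type*} [TopologicalSpace S] [CompactSpace S] [T2Space S]
  [Nonempty S] [MulAction G S] [ContinuousConstSMul G S]

/-- The Ellis semigroup of the `G`-flow `S`: the closure in the product space `S → S`
of the set of action maps `x ↦ g • x`. -/
def EllisSemigroup (G : Type*) [Group G] (S : Type*) [TopologicalSpace S]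
    [MulAction G S] : Set (S → S) :=
  closure (Set.range fun g : G => fun x : S => g • x)

theorem ellisAct_mem (g : G) {p : S → S} (hp : p ∈ EllisSemigroup G S) :
    ((fun x : S => g • x) ∘ p) ∈ EllisSemigroup G S := by
  have hc : Continuous fun q : S → S => (fun x : S => g • x) ∘ q :=
    continuous_pi fun x => (continuous_const_smul g).comp (continuous_apply x)
  have h1 : (fun q : S → S => (fun x : S => g • x) ∘ q) ''
      (Set.range fun h : G => fun x : S => h • x) ⊆
      Set.range fun h : G => fun x : S => h • x := by
    rintro _ ⟨_, ⟨h, rfl⟩, rfl⟩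
    exact ⟨g * h, by funext x; simp [mul_smul]⟩
  exact closure_mono h1 (image_closure_subset_closure_image hc ⟨p, hp, rfl⟩)

/-- The `G`-action on the Ellis semigroup, `g • p = (x ↦ g • x) ∘ p`. -/
def ellisAct (g : G) (p : EllisSemigroup G S) : EllisSemigroup G S :=
  ⟨(fun x : S => g • x) ∘ (p : S → S), ellisAct_mem g p.2⟩

/-- Suppose `K` is a closed left ideal of the Ellis semigroup `(E(S), ∘)` which is a compact
topological group under composition and the subspace topology, and let `η` be its Haar
probability measure (the regular Borel probability measure invariant under all group
translations).  Then the pushforward measure `η*` on `E(S)` (i.e., `η*(X) = η(X ∩ K)`) is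
invariant under the `G`-action `g • p = (x ↦ g • x) ∘ p` on `E(S)`. -/
theorem haar_pushforward_invariant
    [MeasurableSpace (EllisSemigroup G S)] [BorelSpace (EllisSemigroup G S)]
    (K : Set (S → S)) (hKE : K ⊆ EllisSemigroup G S) (hKcl : IsClosed K)
    [MeasurableSpace K] [BorelSpace K]
    (hideal : ∀ p ∈ EllisSemigroup G S, ∀ q ∈ K, p ∘ q ∈ K)
    (hmul : ∀ p ∈ K, ∀ q ∈ K, p ∘ q ∈ K)
    (u : S → S) (hu : u ∈ K) (hid : ∀ p ∈ K, u ∘ p = p ∧ p ∘ u = p)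
    (hinv : ∀ p ∈ K, ∃ q ∈ K, p ∘ q = u ∧ q ∘ p = u)
    (hcompK : IsCompact K)
    (hcontmul : Continuous fun pq : K × K => ((pq.1 : S → S) ∘ (pq.2 : S → S)))
    (η : Measure K) (hprob : IsProbabilityMeasure η) (hreg : η.Regular)
    (hlinv : ∀ k : K, η.map
      (fun p : K => (⟨(k : S → S) ∘ (p : S → S), hmul _ k.2 _ p.2⟩ : K)) = η)
    (hrinv : ∀ k : K, η.map
      (fun p : K => (⟨(p : S → S) ∘ (k : S → S), hmul _ p.2 _ k.2⟩ : K)) = η) :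
    ∀ (g : G) (X : Set (EllisSemigroup G S)), MeasurableSet X →
      (η.map (Set.inclusion hKE)) (ellisAct g '' X) =
        (η.map (Set.inclusion hKE)) X := by
  intro g X hX
  have hincl : Measurable (Set.inclusion hKE) := (continuous_inclusion hKE).measurable
  have hact : Continuous (ellisAct (S := S) g⁻¹) :=
    continuous_induced_rng.2 (continuous_pi fun x =>
      (continuous_const_smul g⁻¹).comp ((continuous_apply x).comp continuous_subtype_val))
  have himage : ellisAct g '' X = ellisAct g⁻¹ ⁻¹' X := by
    refine congrFun (Set.image_eq_preimage_of_inverse (fun p => ?_) fun p => ?_) X <;>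
      exact Subtype.ext (funext fun x => by simp [ellisAct])
  -- The element `g⁻¹ • u` of `K`; on `K`, the action of `g⁻¹` is left translation by it.
  let k : K := ⟨(fun x => g⁻¹ • x) ∘ u, hideal _ (subset_closure ⟨g⁻¹, rfl⟩) u hu⟩
  let L : K → K := fun p => ⟨(k : S → S) ∘ (p : S → S), hmul _ k.2 _ p.2⟩
  have hL : Measurable L :=
    (Continuous.subtype_mk (hcontmul.comp (Continuous.prodMk_right k)) _).measurable
  have hkey : ∀ p : K, ellisAct g⁻¹ (Set.inclusion hKE p) = Set.inclusion hKE (L p) := by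
    intro p
    apply Subtype.ext
    change (fun x => g⁻¹ • x) ∘ (p : S → S) = (fun x => g⁻¹ • x) ∘ (u ∘ (p : S → S))
    rw [(hid p p.2).1]
  rw [himage, Measure.map_apply hincl (hact.measurable hX), Measure.map_apply hincl hX]
  calc η (Set.inclusion hKE ⁻¹' (ellisAct g⁻¹ ⁻¹' X))
      = η (L ⁻¹' (Set.inclusion hKE ⁻¹' X)) := by
        congr 1
        ext p
        simp only [Set.mem_preimage, hkey]
    _ = η.map L (Set.inclusion hKE ⁻¹' X) := (Measure.map_apply hL (hincl hX)).symm
    _ = η (Set.inclusion hKE ⁻¹' X) := by rw [hlinv k]
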